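/- Let p be a prime number different from 5 such that B_5^{(6)}(p − 1) ≡ 0 (mod 5). Then for all integers n ≥ 0 and t ≥ 0, B_5^{(6)}(p^{4t}·n + (p^{4t} − 1)) ≡ p^{2t}·B_5^{(6)}(n) (mod 5). -/

import Mathlib

/-!
The proof computes `B₅⁽⁶⁾(n)` modulo `5` in closed form: `B₅⁽⁶⁾(n) = (n + 1) σ₁(n + 1)`
(`B_eq_mul_sigma`).

Write `P = ∏ (1 - X ^ m)`, `S = ∑ σ₁(m) X ^ m`, `Δ = X P ^ 24` and `θ = X d/dX`, all over `ZMod 5`.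
The generating series of `5`-regular partitions is `∏ (1 - X ^ (5 m)) / (1 - X ^ m) = P ^ 4`
(`regularSeries_eq`), so that of `B₅⁽⁶⁾` is `P ^ 24` and `B₅⁽⁶⁾(n)` is the coefficient of
`X ^ (n + 1)` in `Δ`. The closed form is therefore the congruence `Δ = θ S`, which follows from two
identities:

* `3 Δ = 1 - (1 + S)²` (`mod5_identity`), the reduction of `1728 Δ = E₄³ - E₆²`, because `E₄ = 1` and
  `E₆ = 1 + S` modulo `5`;
* `Δ = (1 + S)² - θ S - 1` (`ode_disc`), which is `θ² P - 2 θ P = X P ^ 25` rewritten through the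
  logarithmic derivative `θ P = -S P`; the former comes from the pentagonal number theorem
  and the Frobenius identity `P ^ 25 = P(X ^ 25)`.

Adding them gives `4 Δ = -θ S`, that is `Δ = θ S`.

Given the closed form, `B₅⁽⁶⁾(p - 1) = p (p + 1)` vanishes modulo `5` for a prime `p ≠ 5` exactly when
`p = -1`, and then `p ^ (4 t) = p ^ (2 t) = 1` and `σ₁(p ^ (4 t) m) = σ₁(m)` modulo `5`
(`sigma_shift`).
-/

/-- `B ℓ r n` is the number of `ℓ`-regular `r`-multipartitions of `n`:
ordered `r`-tuples `(λ⁽¹⁾, …, λ⁽ʳ⁾)` of partitions, none of whose parts is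
divisible by `ℓ`, whose sizes sum to `n`. -/
def B (ℓ r n : ℕ) : ℕ :=
  Fintype.card {f : Fin r → Σ a : Fin (n + 1), Nat.Partition a //
    (∑ i, ((f i).1 : ℕ)) = n ∧ ∀ i, ∀ part ∈ (f i).2.parts, ¬ ℓ ∣ part}

open PowerSeries Filter Topology

/-! ### Euler's product on the unit disc -/

/-- A bound uniform in `k` and `n`; it makes the tails in the analytic pentagonal number theorem
dominated by a geometric series. -/
lemma norm_prod_one_sub_pow_le {x : ℂ} (hx : ‖x‖ < 1) (k n : ℕ) :
    ‖∏ i ∈ Finset.range n, (1 - x ^ (k + i + 1))‖ ≤ Real.exp ((1 - ‖x‖)⁻¹) := by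
  have h0 := norm_nonneg x
  calc ‖∏ i ∈ Finset.range n, (1 - x ^ (k + i + 1))‖
      ≤ ∏ i ∈ Finset.range n, Real.exp (‖x‖ ^ i) := by
        rw [norm_prod]
        refine Finset.prod_le_prod (fun _ _ ↦ norm_nonneg _) fun i _ ↦ ?_
        calc ‖1 - x ^ (k + i + 1)‖ ≤ 1 + ‖x‖ ^ (k + i + 1) := by
              simpa using norm_sub_le (1 : ℂ) (x ^ (k + i + 1))
          _ ≤ ‖x‖ ^ i + 1 := by
              rw [add_comm]
              gcongr ?_ + 1
              exact pow_le_pow_of_le_one h0 hx.le (by omega)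
          _ ≤ _ := Real.add_one_le_exp _
    _ = Real.exp (∑ i ∈ Finset.range n, ‖x‖ ^ i) := (Real.exp_sum _ _).symm
    _ ≤ _ := by
        gcongr
        rw [← tsum_geometric_of_lt_one h0 hx]
        exact (summable_geometric_of_lt_one h0 hx).sum_le_tsum _ (fun _ _ ↦ by positivity)

lemma summable_coeff_pentagonalSeries {x : ℂ} (hx : ‖x‖ < 1) :
    Summable fun n ↦ ‖(pentagonalSeries ℂ).coeff n * x ^ n‖ := by
  refine (summable_geometric_of_lt_one (norm_nonneg x) hx).of_nonneg_of_le
    (fun _ ↦ norm_nonneg _) fun n ↦ ?_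
  rw [norm_mul, norm_pow]
  refine mul_le_of_le_one_left (by positivity) ?_
  by_cases h : n ∈ Set.range pentagonal
  · obtain ⟨k, rfl⟩ := h
    rw [coeff_pentagonalSeries_pentagonal]
    rcases Int.even_or_odd k with hk | hk
    · simp [Int.negOnePow_even _ hk]
    · simp [Int.negOnePow_odd _ hk]
  · simp [coeff_pentagonalSeries_eq_zero _ h]

/-- The pentagonal number theorem as an identity of functions on the open unit disc. -/
lemma tprod_one_sub_pow_eq_tsum {x : ℂ} (hx : ‖x‖ < 1) :
    HasSum (fun n ↦ (pentagonalSeries ℂ).coeff n * x ^ n) (∏' n, (1 - x ^ (n + 1))) := by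
  have h0 := norm_nonneg x
  -- the sum over exponents, re-indexed by the integers
  have hs : HasSum (fun k : ℤ ↦ (Int.negOnePow k : ℂ) * x ^ pentagonal k)
      (∑' n, (pentagonalSeries ℂ).coeff n * x ^ n) := by
    have := (summable_coeff_pentagonalSeries hx).of_norm.hasSum
    rw [← pentagonal_injective.hasSum_iff fun n hn ↦ by
      simp [coeff_pentagonalSeries_eq_zero ℂ hn]] at this
    convert! this using 2 with k
    rw [Function.comp_apply, coeff_pentagonalSeries_pentagonal]
  have hs' : HasSum (fun k : ℕ ↦ (-1) ^ k * (x ^ pentagonal (-k) - x ^ pentagonal (k + 1)))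
      (∑' n, (pentagonalSeries ℂ).coeff n * x ^ n) := by
    rw [← neg_injective.hasSum_iff (fun x hx ↦ by absurd hx; use -x; simp)] at hs
    convert hs.nat_add_neg_add_one using 2 with k
    simp_rw [Function.comp_apply, neg_neg, Int.negOnePow_add]
    simp
    ring
  set C := Real.exp ((1 - ‖x‖)⁻¹)
  have hC : 0 < C := Real.exp_pos _
  have hterm (k n : ℕ) :
      ‖x ^ ((k + 1) * n) * ∏ i ∈ Finset.range (n + 1), (1 - x ^ (k + i + 1))‖ ≤ ‖x‖ ^ n * C := by
    rw [norm_mul, norm_pow]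
    gcongr ?_ * ?_
    · exact pow_le_pow_of_le_one h0 hx.le (by nlinarith)
    · exact norm_prod_one_sub_pow_le hx _ _
  have hgeo : Summable fun n : ℕ ↦ ‖x‖ ^ n * C :=
    (summable_geometric_of_lt_one h0 hx).mul_right _
  have key := Pentagonal.tprod_one_sub_pow (x := x)
    (tendsto_pow_atTop_nhds_zero_of_norm_lt_one hx)
    (fun k ↦ .of_norm_bounded hgeo (hterm k)) ?_ hs'.summable ?_
  · rw [key, hs'.tsum_eq]
    exact (summable_coeff_pentagonalSeries hx).of_norm.hasSum
  · intro k
    have : Summable fun n : ℕ ↦ ‖-x ^ (n + k + 1)‖ := by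
      simp only [norm_neg, norm_pow, add_assoc]
      exact (summable_nat_add_iff (k + 1)).2 (summable_geometric_of_lt_one h0 hx)
    simpa [sub_eq_add_neg] using multipliable_one_add_of_summable this
  · refine squeeze_zero_norm (a := fun k ↦ ‖x‖ ^ k * (∑' n : ℕ, ‖x‖ ^ n * C)) (fun k ↦ ?_) ?_
    · rw [norm_mul, norm_mul, norm_pow, norm_pow, norm_neg, norm_one, one_pow, one_mul]
      gcongr ?_ * ?_
      · refine pow_le_pow_of_le_one h0 hx.le ?_
        rw [Nat.le_div_iff_mul_le two_pos]
        nlinarith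
      · exact tsum_of_norm_bounded hgeo.hasSum (hterm k)
    · simpa using (tendsto_pow_atTop_nhds_zero_of_lt_one h0 hx).mul_const (∑' n : ℕ, ‖x‖ ^ n * C)

/-- Absolutely convergent power series may be raised to powers coefficientwise. -/
lemma hasSum_coeff_pow {f : ℂ⟦X⟧} {x s : ℂ} (hf : Summable fun n ↦ ‖f.coeff n * x ^ n‖)
    (hs : HasSum (fun n ↦ f.coeff n * x ^ n) s) (r : ℕ) :
    (Summable fun n ↦ ‖(f ^ r).coeff n * x ^ n‖) ∧
      HasSum (fun n ↦ (f ^ r).coeff n * x ^ n) (s ^ r) := by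
  induction r with
  | zero =>
    have h : ∀ n, n ≠ 0 → (1 : ℂ⟦X⟧).coeff n * x ^ n = 0 := fun n hn ↦ by simp [coeff_one, hn]
    simp only [pow_zero]
    refine ⟨summable_of_ne_finset_zero (s := {0}) fun n hn ↦ ?_, ?_⟩
    · rw [h n (by simpa using hn), norm_zero]
    · simpa using hasSum_single 0 h
  | succ r ih =>
    have e (n : ℕ) : (f ^ (r + 1)).coeff n * x ^ n = ∑ kl ∈ Finset.HasAntidiagonal.antidiagonal n,
        ((f ^ r).coeff kl.1 * x ^ kl.1) * (f.coeff kl.2 * x ^ kl.2) := by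
      rw [pow_succ, coeff_mul, Finset.sum_mul]
      refine Finset.sum_congr rfl fun kl hkl ↦ ?_
      rw [← Finset.HasAntidiagonal.mem_antidiagonal.1 hkl]
      ring
    simp only [e]
    have hsum := summable_norm_sum_mul_antidiagonal_of_summable_norm
      (f := fun n ↦ (f ^ r).coeff n * x ^ n) (g := fun n ↦ f.coeff n * x ^ n) ih.1 hf
    refine ⟨hsum, ?_⟩
    rw [pow_succ, ← ih.2.tsum_eq, ← hs.tsum_eq,
      tsum_mul_tsum_eq_tsum_sum_antidiagonal_of_summable_norm ih.1 hf]
    exact hsum.of_norm.hasSum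

/-! ### The discriminant in terms of Eisenstein series modulo 5 -/

/-- The generating series `∑ σ₁(m) X ^ m` of the divisor sums, without constant term since
`σ₁(0) = 0`. -/
noncomputable def sigmaSeries (R : Type*) [CommRing R] : R⟦X⟧ :=
  .mk fun m ↦ (ArithmeticFunction.sigma 1 m : R)

section

open UpperHalfPlane ModularForm ModularFormClass MatrixGroups EisensteinSeries

lemma qExpansion_discriminant :
    qExpansion 1 CuspForm.discriminant = X * pentagonalSeries ℂ ^ 24 := by
  ext m
  refine (ModularFormClass.qExpansion_coeff_unique (Γ := 𝒮ℒ) (k := 12) (h := 1) one_pos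
    one_mem_strictPeriods_SL (c := fun m ↦ (X * pentagonalSeries ℂ ^ 24).coeff m)
    (f := CuspForm.discriminant) (fun τ ↦ ?_) m).symm
  have hq : ‖Function.Periodic.qParam 1 (τ : ℂ)‖ < 1 :=
    Function.Periodic.norm_qParam_lt_one one_pos τ.im_pos
  set q := Function.Periodic.qParam 1 (τ : ℂ)
  have hp := hasSum_coeff_pow (summable_coeff_pentagonalSeries hq) (tprod_one_sub_pow_eq_tsum hq) 24
  have hΔ : CuspForm.discriminant τ = q * (∏' n, (1 - q ^ (n + 1))) ^ 24 := by
    have hmul : Multipliable fun n : ℕ ↦ 1 - q ^ (n + 1) := by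
      simpa [sub_eq_add_neg] using multipliable_one_add_of_summable (summable_eta_q τ)
    rw [← hmul.tprod_pow]
    exact discriminant_eq_q_prod τ
  rw [hΔ, ← hasSum_nat_add_iff' 1]
  convert! hp.2.mul_left q using 1
  · ext n
    simp only [coeff_succ_X_mul, smul_eq_mul, q]
    ring
  · simp

/-- `1728 Δ = E₄³ - E₆²` on the level of formal `q`-expansions. -/
lemma qExpansion_E_identity :
    (1728 : ℂ) • (X * pentagonalSeries ℂ ^ 24) = qExpansion 1 E₄ ^ 3 - qExpansion 1 E₆ ^ 2 := by
  let F : ModularForm 𝒮ℒ 12 :=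
    ModularForm.mcast (by decide) (E₄.pow 3) - ModularForm.mcast (by decide) (E₆.pow 2)
  have h : ((1728 : ℂ) • CuspForm.discriminant : ℍ → ℂ) = F := by
    ext z
    have hz := discriminant_eq_E₄_cube_sub_E₆_sq z
    have : F z = E₄ z ^ 3 - E₆ z ^ 2 := by
      simp only [F, coe_mcast, ModularForm.coe_pow, sub_apply, Pi.pow_apply]
    rw [this]
    simp only [Pi.smul_apply, smul_eq_mul, CuspForm.coe_discriminant, hz]
    ring
  have h2 := ModularForm.qExpansion_smul one_pos one_mem_strictPeriods_SL 1728
      CuspForm.discriminant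
  rw [h, qExpansion_discriminant] at h2
  rw [← h2]
  simp only [F, FunLike.coe_sub, coe_mcast,
    ModularForm.qExpansion_sub one_pos one_mem_strictPeriods_SL,
    ModularForm.qExpansion_pow one_pos one_mem_strictPeriods_SL]

lemma map_pentagonalSeries (R : Type*) [CommRing R] :
    (pentagonalSeries ℤ).map (Int.castRingHom R) = pentagonalSeries R := by
  ext n
  rw [coeff_map]
  by_cases h : n ∈ Set.range pentagonal
  · obtain ⟨k, rfl⟩ := h
    simp [coeff_pentagonalSeries_pentagonal]
  · simp [coeff_pentagonalSeries_eq_zero _ h]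

/-- The `q`-expansion `1 + 240 ∑ σ₃(m) X ^ m` of the Eisenstein series `E₄`, over the integers. -/
noncomputable def intE4 : ℤ⟦X⟧ :=
  .mk fun m ↦ if m = 0 then 1 else 240 * (ArithmeticFunction.sigma 3 m : ℤ)

/-- The `q`-expansion `1 - 504 ∑ σ₅(m) X ^ m` of the Eisenstein series `E₆`, over the integers. -/
noncomputable def intE6 : ℤ⟦X⟧ :=
  .mk fun m ↦ if m = 0 then 1 else -504 * (ArithmeticFunction.sigma 5 m : ℤ)

/-- `1728 Δ = E₄³ - E₆²` over the integers, so that it can be reduced modulo `5`. -/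
lemma intE_identity :
    1728 * (X * pentagonalSeries ℤ ^ 24) = intE4 ^ 3 - intE6 ^ 2 := by
  apply map_injective (Int.castRingHom ℂ) Int.cast_injective
  have h4 : intE4.map (Int.castRingHom ℂ) = qExpansion 1 E₄ := by
    ext m
    rw [E_qExpansion_coeff _ ⟨2, rfl⟩, coeff_map, intE4, coeff_mk,
      show bernoulli 4 = -1 / 30 by decide +kernel]
    split_ifs <;> norm_num
  have h6 : intE6.map (Int.castRingHom ℂ) = qExpansion 1 E₆ := by
    ext m
    rw [E_qExpansion_coeff _ ⟨3, rfl⟩, coeff_map, intE6, coeff_mk,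
      show bernoulli 6 = 1 / 42 by decide +kernel]
    split_ifs <;> norm_num
  rw [map_sub, map_pow, map_pow, h4, h6, ← qExpansion_E_identity]
  rw [map_mul, map_mul, map_pow, map_X, map_pentagonalSeries, map_ofNat, ← map_ofNat C 1728,
    smul_eq_C_mul]

end

/-- Modulo `5`, `240 = 0` gives `E₄ = 1`, while `-504 = 1` and `d ^ 5 = d` give `E₆ = 1 + S` with `S`
the series of divisor sums; so `1728 Δ = E₄³ - E₆²` becomes `3 Δ = 1 - (1 + S)²`. -/
lemma mod5_identity :
    (3 : (ZMod 5)⟦X⟧) * (X * pentagonalSeries (ZMod 5) ^ 24) =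
      1 - (1 + sigmaSeries (ZMod 5)) ^ 2 := by
  have h := congrArg (PowerSeries.map (Int.castRingHom (ZMod 5))) intE_identity
  have h4 : intE4.map (Int.castRingHom (ZMod 5)) = 1 := by
    ext m
    rw [coeff_map, intE4, coeff_mk, coeff_one]
    split_ifs
    · simp
    · simp [show (240 : ZMod 5) = 0 from rfl]
  have h6 : intE6.map (Int.castRingHom (ZMod 5)) = 1 + sigmaSeries (ZMod 5) := by
    ext m
    rw [coeff_map, intE6, coeff_mk, map_add, sigmaSeries, coeff_mk, coeff_one]
    split_ifs with hm
    · simp [hm]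
    · have : ∀ x : ZMod 5, x ^ 5 = x := by decide
      simp [show (504 : ZMod 5) = -1 from rfl, ArithmeticFunction.sigma_apply, this]
  rw [map_sub, map_pow, map_pow, h4, h6] at h
  rw [one_pow] at h
  rw [← h]
  rw [map_mul, map_mul, map_pow, map_X, map_pentagonalSeries, map_ofNat]
  congr 1

/-! ### A differential equation for Euler's product modulo 5 -/

/-- The Euler operator `X · d/dX`, as a derivation of `R⟦X⟧`. -/
noncomputable def theta (R : Type*) [CommRing R] : Derivation R R⟦X⟧ R⟦X⟧ :=
  (X : R⟦X⟧) • derivative R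

lemma coeff_theta {R : Type*} [CommRing R] (f : R⟦X⟧) (n : ℕ) :
    (theta R f).coeff n = n * f.coeff n := by
  rw [theta, Derivation.smul_apply, smul_eq_mul]
  cases n with
  | zero => simp
  | succ n => rw [coeff_succ_X_mul, coeff_derivative]; push_cast; ring

/-- The series `(n + 1) X ^ (n + 1) / (1 - X ^ (n + 1))`, given by its coefficients: `n + 1` at each
positive multiple of `n + 1`. The index is shifted by one to match `pentagonalSeries`. -/
noncomputable def lambertTerm (R : Type*) [CommRing R] (n : ℕ) : R⟦X⟧ :=
  .mk fun m ↦ if n + 1 ∣ m ∧ m ≠ 0 then ((n + 1 : ℕ) : R) else 0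

lemma lambertTerm_mul (R : Type*) [CommRing R] (n : ℕ) :
    lambertTerm R n * (1 - X ^ (n + 1)) = ((n + 1 : ℕ) : R⟦X⟧) * X ^ (n + 1) := by
  ext m
  rw [mul_sub, mul_one, map_sub, coeff_mul_X_pow', ← map_natCast C, coeff_C_mul, coeff_X_pow]
  simp only [lambertTerm, coeff_mk]
  rcases lt_trichotomy m (n + 1) with h | rfl | h
  · have : ¬ (n + 1 ∣ m ∧ m ≠ 0) := fun ⟨h1, h2⟩ ↦ h2 (Nat.eq_zero_of_dvd_of_lt h1 h)
    simp [this, h.ne, h.not_ge]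
  · simp
  · have h1 : m - (n + 1) ≠ 0 := by omega
    simp [h.ne', h.le, h1, (show m ≠ 0 by omega), Nat.dvd_sub_self_right, h.not_ge]

lemma theta_prod_one_sub (R : Type*) [CommRing R] (s : Finset ℕ) :
    theta R (∏ n ∈ s, (1 - X ^ (n + 1))) =
      -(∑ n ∈ s, lambertTerm R n) * ∏ n ∈ s, (1 - X ^ (n + 1)) := by
  classical
  induction s using Finset.induction_on with
  | empty => simp
  | insert a s ha ih =>
    have h1 : theta R (1 - X ^ (a + 1)) = -(((a + 1 : ℕ) : R⟦X⟧) * X ^ (a + 1)) := by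
      ext m
      rw [coeff_theta, map_sub, map_neg, ← map_natCast C, coeff_C_mul, coeff_one, coeff_X_pow]
      split_ifs with h2 h3 h3 <;> simp_all
    rw [Finset.prod_insert ha, Finset.sum_insert ha, Derivation.leibniz, h1, ih, ← lambertTerm_mul]
    simp only [smul_eq_mul]
    ring

/-- Only the first `d` Lambert terms contribute to the coefficient of `X ^ d`, which is `σ₁(d)`. -/
lemma coeff_sum_lambertTerm (R : Type*) [CommRing R] {s : Finset ℕ} {d : ℕ}
    (hs : Finset.range d ⊆ s) :
    (∑ n ∈ s, lambertTerm R n).coeff d = (sigmaSeries R).coeff d := by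
  rw [map_sum]
  simp only [lambertTerm, sigmaSeries, coeff_mk, ArithmeticFunction.sigma_one_apply]
  rcases eq_or_ne d 0 with rfl | hd
  · simp
  rw [← Finset.sum_subset hs, Nat.divisors, Finset.sum_filter, Finset.sum_Ico_eq_sum_range]
  · push_cast
    simp only [hd, ne_eq, not_false_eq_true, and_true, add_comm 1]
    simp [add_comm]
  · intro n _ hn
    rw [if_neg]
    rintro ⟨h, _⟩
    have := Nat.le_of_dvd (by omega) h
    simp at hn
    omega

/-- Logarithmic derivative of Euler's product: `θ P = -(∑ σ₁(m) X ^ m) P`. -/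
lemma theta_pentagonalSeries (R : Type*) [CommRing R] :
    theta R (pentagonalSeries R) = -sigmaSeries R * pentagonalSeries R := by
  ext d
  have hev : ∀ᶠ s in atTop, ∀ e ≤ d, (∏ n ∈ s, (1 - X ^ (n + 1) : R⟦X⟧)).coeff e =
      (pentagonalSeries R).coeff e :=
    (Set.finite_Iic d).eventually_all.2 fun e _ ↦ coeff_prod_one_sub_X_pow_eventually_eq R e
  obtain ⟨s, hs, hsd⟩ := (hev.and (eventually_ge_atTop (Finset.range d))).exists
  rw [coeff_theta, ← hs d le_rfl, ← coeff_theta, theta_prod_one_sub, coeff_mul, coeff_mul]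
  refine Finset.sum_congr rfl fun kl hkl ↦ ?_
  have := Finset.HasAntidiagonal.mem_antidiagonal.1 hkl
  rw [hs kl.2 (by omega), map_neg, map_neg, coeff_sum_lambertTerm R
    ((Finset.range_mono (show kl.1 ≤ d by omega)).trans hsd)]

lemma pentagonal_five_mul_add_one (j : ℤ) : pentagonal (5 * j + 1) = 25 * pentagonal (-j) + 1 := by
  have h1 := two_mul_natCast_pentagonal (5 * j + 1)
  have h2 := two_mul_natCast_pentagonal_neg j
  zify
  linarith

instance fact_prime_five : Fact (Nat.Prime 5) := ⟨by norm_num⟩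

/-- Frobenius: over `ZMod 5`, substituting `X ^ 5` for `X` is the same as taking fifth powers. -/
lemma expand_five (f : (ZMod 5)⟦X⟧) : expand 5 (Nat.succ_ne_zero 4) f = f ^ 5 := by
  have h := MvPowerSeries.map_frobenius_expand (p := 5) (Nat.succ_ne_zero 4) (f := f)
  rw [ZMod.frobenius_zmod, MvPowerSeries.map_id] at h
  exact h

lemma coeff_pow_twentyFive (f : (ZMod 5)⟦X⟧) (n : ℕ) :
    (f ^ 25).coeff n = if 25 ∣ n then f.coeff (n / 25) else 0 := by
  rw [show 25 = 5 * 5 from rfl, pow_mul, ← expand_five, ← expand_five, ← expand_mul, coeff_expand]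

/-- The equation `θ² P - 2 θ P = X P ^ 25` modulo `5`. By the pentagonal number theorem the left side
is `∑ (-1) ^ k N (N - 2) X ^ N` over `N = k (3 k - 1) / 2`. Modulo `5` the factor `N (N - 2)` vanishes
unless `k = 5 j + 1`, where it equals `-1`, and then `N - 1` is `25` times the pentagonal number of
index `-j`; the remaining sum is `X P(X ^ 25)`. -/
lemma pentagonalSeries_ode :
    theta (ZMod 5) (theta (ZMod 5) (pentagonalSeries (ZMod 5))) -
      2 * theta (ZMod 5) (pentagonalSeries (ZMod 5)) = X * pentagonalSeries (ZMod 5) ^ 25 := by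
  ext n
  rw [← map_ofNat C 2, map_sub, coeff_C_mul, coeff_theta, coeff_theta]
  have hR : (X * pentagonalSeries (ZMod 5) ^ 25).coeff n =
      if 25 ∣ n - 1 ∧ n ≠ 0 then (pentagonalSeries (ZMod 5)).coeff ((n - 1) / 25) else 0 := by
    cases n with
    | zero => simp
    | succ n => simp [coeff_succ_X_mul, coeff_pow_twentyFive]
  rw [hR]
  by_cases h1 : ∃ j, n = 25 * pentagonal j + 1
  · obtain ⟨j, rfl⟩ := h1
    have hp := pentagonal_five_mul_add_one (-j)
    rw [neg_neg] at hp
    have hc : (pentagonalSeries (ZMod 5)).coeff (25 * pentagonal j + 1) =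
        -((Int.negOnePow j : ℤ) : ZMod 5) := by
      rw [← hp, coeff_pentagonalSeries_pentagonal, Int.negOnePow_add, Int.negOnePow_one]
      rcases Int.even_or_odd j with hj | hj
      · rw [Int.negOnePow_even _ hj, Int.negOnePow_even _ (hj.neg.mul_left 5)]
        simp
      · rw [Int.negOnePow_odd _ hj, Int.negOnePow_odd _ (Odd.mul (by decide) hj.neg)]
        simp
    rw [hc, if_pos ⟨by simp, by simp⟩, Nat.add_sub_cancel, Nat.mul_div_cancel_left _ (by norm_num),
      coeff_pentagonalSeries_pentagonal]
    push_cast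
    rw [show (25 : ZMod 5) = 0 from rfl]
    ring
  have hzero : (if 25 ∣ n - 1 ∧ n ≠ 0 then (pentagonalSeries (ZMod 5)).coeff ((n - 1) / 25)
      else 0) = 0 := by
    split_ifs with hn
    · refine coeff_pentagonalSeries_eq_zero _ fun ⟨j, hj⟩ ↦ h1 ⟨j, ?_⟩
      omega
    · rfl
  rw [hzero]
  by_cases h : n ∈ Set.range pentagonal
  · obtain ⟨k, rfl⟩ := h
    have hk : (2 : ZMod 5) * (pentagonal k : ZMod 5) = k * (3 * k - 1) := by
      exact_mod_cast congrArg (Int.cast : ℤ → ZMod 5) (two_mul_natCast_pentagonal k)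
    have key : ∀ a b : ZMod 5, 2 * a = b * (3 * b - 1) → (b = 1 ∨ a * a - 2 * a = 0) := by decide
    have hk1 : (k : ZMod 5) ≠ 1 := by
      intro hk1
      obtain ⟨j, hj⟩ : ((5 : ℕ) : ℤ) ∣ k - 1 := by
        rw [← ZMod.intCast_zmod_eq_zero_iff_dvd]; simp [hk1]
      obtain rfl : k = 5 * j + 1 := by push_cast at hj; omega
      exact h1 ⟨-j, pentagonal_five_mul_add_one j⟩
    have := (key _ _ hk).resolve_left hk1
    linear_combination (pentagonalSeries (ZMod 5)).coeff (pentagonal k) * this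
  · simp [coeff_pentagonalSeries_eq_zero _ h]

/-- `pentagonalSeries_ode` divided by `P`, with `θ P = -S P` substituted twice, where `S` is the
series of divisor sums. -/
lemma ode_disc : X * pentagonalSeries (ZMod 5) ^ 24 =
    (1 + sigmaSeries (ZMod 5)) ^ 2 - theta (ZMod 5) (sigmaSeries (ZMod 5)) - 1 := by
  have hP : pentagonalSeries (ZMod 5) ≠ 0 := by
    intro h
    have := coeff_pentagonalSeries_pentagonal (ZMod 5) 0
    simp [h] at this
  apply mul_right_cancel₀ hP
  have h := pentagonalSeries_ode
  rw [theta_pentagonalSeries, Derivation.leibniz, theta_pentagonalSeries, map_neg] at h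
  simp only [smul_eq_mul] at h
  linear_combination -h

/-! ### Regular multipartitions -/

lemma five_eq_zero_series : (5 : (ZMod 5)⟦X⟧) = 0 := by
  rw [← map_ofNat C 5, show (OfNat.ofNat 5 : ZMod 5) = 0 from rfl, map_zero]

open PowerSeries.WithPiTopology in
/-- The generating series of `5`-regular partitions is `P ^ 4` modulo `5`: by Glaisher's theorem it
is the product of the sums `1 + y + y ^ 2 + y ^ 3 + y ^ 4` with `y = X ^ (i + 1)`, and each of these is
`(1 - y) ^ 4` modulo `5`. -/
lemma regularSeries_eq :
    (PowerSeries.mk fun n ↦ ((Nat.Partition.restricted n (¬ 5 ∣ ·)).card : ZMod 5)) =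
      pentagonalSeries (ZMod 5) ^ 4 := by
  let _ : TopologicalSpace (ZMod 5) := ⊥
  have _ : DiscreteTopology (ZMod 5) := ⟨rfl⟩
  rw [Nat.Partition.powerSeriesMk_card_restricted_eq_powerSeriesMk_card_countRestricted
    (ZMod 5) (by norm_num : 0 < 5)]
  have h1 := Nat.Partition.hasProd_powerSeriesMk_card_countRestricted (ZMod 5) (by norm_num : 0 < 5)
  have h2 := (hasProd_one_sub_X_pow (ZMod 5)).pow 4
  refine h1.unique ?_
  convert! h2 using 2 with i
  simp only [pow_mul, Finset.sum_range_succ, Finset.sum_range_zero]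
  generalize (X : (ZMod 5)⟦X⟧) ^ (i + 1) = y
  linear_combination (y - y ^ 2 + y ^ 3) * five_eq_zero_series

lemma card_sigma_regular (ℓ n a : ℕ) (ha : a ≤ n) :
    (Finset.univ.filter fun x : Σ a : Fin (n + 1), Nat.Partition a ↦
      (x.1 : ℕ) = a ∧ ∀ part ∈ x.2.parts, ¬ ℓ ∣ part).card =
      (Nat.Partition.restricted a (¬ ℓ ∣ ·)).card := by
  symm
  refine Finset.card_nbij (fun π ↦ ⟨⟨a, by omega⟩, π⟩) ?_ ?_ ?_
  · intro π hπ
    simpa [Nat.Partition.restricted] using hπ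
  · intro π _ π' _ h
    simpa using h
  · rintro ⟨⟨b, hb⟩, π⟩ hx
    simp only [Finset.coe_filter, Finset.mem_univ, true_and, Set.mem_ofPred_eq] at hx
    obtain ⟨rfl, hx⟩ := hx
    exact ⟨π, by simpa [Nat.Partition.restricted] using hx, rfl⟩

/-- Multipartitions sorted by the sizes of their components. -/
lemma B_eq_sum (ℓ r n : ℕ) : B ℓ r n =
    ∑ l ∈ (Finset.univ : Finset (Fin r)).finsuppAntidiag n,
      ∏ i, (Nat.Partition.restricted (l i) (¬ ℓ ∣ ·)).card := by
  classical
  rw [B, Fintype.card_subtype, Finset.card_eq_sum_card_fiberwise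
    (f := fun f ↦ Finsupp.equivFunOnFinite.symm fun i ↦ ((f i).1 : ℕ))
    (t := (Finset.univ : Finset (Fin r)).finsuppAntidiag n)]
  · refine Finset.sum_congr rfl fun l hl ↦ ?_
    rw [Finset.mem_finsuppAntidiag] at hl
    have hle (i : Fin r) : l i ≤ n :=
      hl.1 ▸ Finset.single_le_sum (f := l) (fun _ _ ↦ Nat.zero_le _) (Finset.mem_univ i)
    simp_rw [← fun i ↦ card_sigma_regular ℓ n (l i) (hle i)]
    rw [← Fintype.card_piFinset]
    congr 1
    ext f
    simp only [Finset.mem_filter, Finset.mem_univ, true_and, Fintype.mem_piFinset,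
      Equiv.symm_apply_eq, funext_iff, Finsupp.equivFunOnFinite_apply]
    constructor
    · rintro ⟨⟨_, h1⟩, h2⟩ i
      exact ⟨h2 i, h1 i⟩
    · intro h
      refine ⟨⟨?_, fun i ↦ (h i).2⟩, fun i ↦ (h i).1⟩
      exact (Finset.sum_congr rfl fun i _ ↦ (h i).1).trans hl.1
  · intro f hf
    simp only [Finset.coe_filter, Finset.mem_univ, true_and, Set.mem_ofPred_eq] at hf
    simpa [Finset.mem_finsuppAntidiag] using hf.1

lemma B_eq_coeff (r n : ℕ) : (B 5 r n : ZMod 5) =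
    ((PowerSeries.mk fun n ↦
      ((Nat.Partition.restricted n (¬ 5 ∣ ·)).card : ZMod 5)) ^ r).coeff n := by
  rw [B_eq_sum, ← Fin.prod_const, coeff_prod]
  simp

/-! ### The closed form and the congruence -/

open ArithmeticFunction in
/-- If `p = -1` modulo `5`, then `σ₁(p ^ a) = 1 - 1 + 1 - ⋯` depends only on the parity of `a`, so
multiplying the argument by `p ^ (4 t)` does not change `σ₁` modulo `5`. -/
lemma sigma_shift (p : ℕ) (hp : p.Prime) (h : (p : ZMod 5) = -1) (t m : ℕ) (hm : m ≠ 0) :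
    (sigma 1 (p ^ (4 * t) * m) : ZMod 5) = sigma 1 m := by
  obtain ⟨a, m', hm', rfl⟩ := Nat.exists_eq_pow_mul_and_not_dvd hm p hp.ne_one
  have hc (b : ℕ) : Nat.Coprime (p ^ b) m' :=
    Nat.Coprime.pow_left b ((Nat.Prime.coprime_iff_not_dvd hp).2 hm')
  rw [← mul_assoc, ← pow_add, isMultiplicative_sigma.map_mul_of_coprime (hc _),
    isMultiplicative_sigma.map_mul_of_coprime (hc _)]
  push_cast
  congr 1
  rw [sigma_one_apply_prime_pow hp, sigma_one_apply_prime_pow hp]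
  push_cast
  rw [h, neg_one_geom_sum, neg_one_geom_sum]
  congr 1
  simp [Nat.even_add, show Even 4 by decide]

/-- The congruence `B₅⁽⁶⁾(n) = (n + 1) σ₁(n + 1)` modulo `5`. -/
lemma B_eq_mul_sigma (n : ℕ) : (B 5 6 n : ZMod 5) =
    ((n + 1 : ℕ) : ZMod 5) * (ArithmeticFunction.sigma 1 (n + 1) : ZMod 5) := by
  have hD : X * pentagonalSeries (ZMod 5) ^ 24 = theta (ZMod 5) (sigmaSeries (ZMod 5)) := by
    linear_combination (-1 : (ZMod 5)⟦X⟧) * ode_disc - mod5_identity +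
      (X * pentagonalSeries (ZMod 5) ^ 24) * five_eq_zero_series
  rw [B_eq_coeff, regularSeries_eq, ← pow_mul, ← coeff_succ_X_mul, hD, coeff_theta, sigmaSeries,
    coeff_mk]

theorem stmt_5 (p : ℕ) (hp : Nat.Prime p) (hp5 : p ≠ 5)
    (h : B 5 6 (p - 1) ≡ 0 [MOD 5]) (n t : ℕ) :
    B 5 6 (p ^ (4 * t) * n + (p ^ (4 * t) - 1)) ≡ p ^ (2 * t) * B 5 6 n [MOD 5] := by
  -- the hypothesis reads `p (p + 1) = 0` modulo `5`
  have hp1 : (p : ZMod 5) = -1 := by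
    have hp0 : (p : ZMod 5) ≠ 0 := by
      rw [Ne, ZMod.natCast_eq_zero_iff]
      exact fun h5 ↦ hp5 ((Nat.prime_dvd_prime_iff_eq Nat.prime_five hp).1 h5).symm
    have h0 := (ZMod.natCast_eq_natCast_iff _ _ _).2 h
    rw [B_eq_mul_sigma, Nat.sub_add_cancel hp.one_le, ← pow_one p,
      ArithmeticFunction.sigma_one_apply_prime_pow hp] at h0
    simp only [Finset.sum_range_succ, Finset.sum_range_zero, pow_zero, pow_one, Nat.cast_add,
      Nat.cast_zero, Nat.cast_one, zero_add, mul_eq_zero, hp0, false_or] at h0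
    linear_combination h0
  have hpos : 1 ≤ p ^ (4 * t) := Nat.one_le_pow _ _ hp.pos
  have hidx : p ^ (4 * t) * n + (p ^ (4 * t) - 1) + 1 = p ^ (4 * t) * (n + 1) := by
    rw [mul_add, mul_one]; omega
  rw [← ZMod.natCast_eq_natCast_iff, Nat.cast_mul, B_eq_mul_sigma, B_eq_mul_sigma, hidx,
    sigma_shift p hp hp1 t (n + 1) (Nat.succ_ne_zero n), Nat.cast_mul, Nat.cast_pow, Nat.cast_pow,
    hp1, pow_mul, pow_mul (-1 : ZMod 5) 2 t, Even.neg_one_pow (by decide : Even 4), neg_one_sq,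
    one_pow, one_mul, one_mul]
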